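/- Let C = conv(S) be the convex hull of a finite set S in E^d, and let Y be a hyperplane such that exactly one point v ∈ S lies strictly on one side of Y while all other points of S lie strictly on the other side. Then every extreme point of the section C ∩ Y lies on an edge (1-dimensional exposed face) of C having v as an endpoint, and is the unique intersection point of that edge with Y; consequently C ∩ Y has at most |S| − 1 extreme points. (Claim used in Section 4.1 to bound the complexity of the section Q̃_i = Q_i ∩ Y.) -/

import Mathlib

/-!
Project centrally from `v` onto the hyperplane `Y = {φ = b}`. Central projection maps segments to
segments, so the section `C ∩ Y` is the convex hull of the projections `p x` of the points
`x ∈ S \ {v}`; its extreme points are therefore among these at most `|S| - 1` points.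

An extreme point `q` of the section is the unique maximizer over the points `p x` of some linear
functional. Adding a multiple of `φ`, which is constant on `Y`, yields a functional `g` that is
still uniquely maximized at `q` and satisfies `g v = g q`. As `p x` lies on the open ray from `v`
through `x`, the maximum of `g` over `S` is `g v`, and it is attained only at points `x` on the line
through `v` and `q`. Hence the face of `C` on which `g` is maximal is the required edge.
-/

open Set Pointwise RealInnerProductSpace

/-- The dimension of the affine hull of a set. -/
noncomputable def adim {N : ℕ} (F : Set (EuclideanSpace ℝ (Fin N))) : ℕ :=
  Module.finrank ℝ (vectorSpan ℝ F)

open AffineMap AffineSubspace Module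
open scoped Convex

section Line

variable {𝕜 E P : Type*} [Field 𝕜] [AddCommGroup E] [Module 𝕜 E] [AddTorsor E P]

lemma finrank_vectorSpan_eq_one_of_subset_line {e : Set P} {p q : P} (hpq : p ≠ q) (hp : p ∈ e)
    (hq : q ∈ e) (he : e ⊆ line[𝕜, p, q]) : finrank 𝕜 (vectorSpan 𝕜 e) = 1 := by
  have hspan : affineSpan 𝕜 e = line[𝕜, p, q] :=
    le_antisymm (affineSpan_le.2 he) (affineSpan_mono 𝕜 (pair_subset hp hq))
  rw [← direction_affineSpan, hspan, direction_affineSpan, vectorSpan_pair,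
    finrank_span_singleton (vsub_ne_zero.2 hpq)]

lemma line_inter_hyperplane {v q : E} {φ : E →ₗ[𝕜] 𝕜} (h : φ v ≠ φ q) :
    (line[𝕜, v, q] : Set E) ∩ {x | φ x = φ q} = {q} := by
  refine Subset.antisymm ?_ (singleton_subset_iff.2 ⟨right_mem_affineSpan_pair 𝕜 v q, rfl⟩)
  rintro y ⟨hy, hyq : φ y = φ q⟩
  obtain ⟨t, rfl⟩ := mem_affineSpan_pair_iff_exists_lineMap_eq.1 hy
  have ht : lineMap (φ v) (φ q) t = φ q := (φ.toAffineMap.apply_lineMap v q t).symm.trans hyq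
  obtain rfl : t = 1 := (lineMap_eq_right_iff.1 ht).resolve_left h
  exact lineMap_apply_one v q

end Line

section CentralProjection

variable {𝕜 E : Type*} [Field 𝕜] [AddCommGroup E] [Module 𝕜 E]

/-- The central projection of `x` from `v` onto the hyperplane `{φ = b}`: the point where the line
through `v` and `x` meets this hyperplane. It has the junk value `v` when `φ x = φ v`. -/
def centralProj (φ : E →ₗ[𝕜] 𝕜) (b : 𝕜) (v x : E) : E :=
  lineMap v x ((b - φ v) / (φ x - φ v))

variable {φ : E →ₗ[𝕜] 𝕜} {b : 𝕜} {v x : E}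

lemma map_centralProj (h : φ v ≠ φ x) : φ (centralProj φ b v x) = b := by
  have : φ x - φ v ≠ 0 := sub_ne_zero.2 h.symm
  simp only [centralProj, lineMap_apply_module', map_add, map_smul, map_sub, smul_eq_mul]
  field_simp
  ring

lemma image_centralProj_subset_hyperplane {T : Set E} (hT : ∀ x ∈ T, φ v ≠ φ x) :
    centralProj φ b v '' T ⊆ {x | φ x = b} :=
  image_subset_iff.2 fun x hx => map_centralProj (hT x hx)

lemma centralProj_lineMap (h : φ v ≠ φ x) (t : 𝕜) :
    centralProj φ (φ (lineMap v x t)) v x = lineMap v x t := by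
  have : φ x - φ v ≠ 0 := sub_ne_zero.2 h.symm
  have ht : (φ (lineMap v x t) - φ v) / (φ x - φ v) = t := by
    simp only [lineMap_apply_module', map_add, map_smul, map_sub, smul_eq_mul]
    field_simp
    ring
  rw [centralProj, ht]

lemma mem_line_centralProj (hv : φ v ≠ b) (hx : φ v ≠ φ x) :
    x ∈ line[𝕜, v, centralProj φ b v x] := by
  have hb : b - φ v ≠ 0 := sub_ne_zero.2 hv.symm
  have hφ : φ x - φ v ≠ 0 := sub_ne_zero.2 hx.symm
  have h1 : (φ x - φ v) / (b - φ v) * ((b - φ v) / (φ x - φ v)) = 1 := by field_simp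
  refine mem_affineSpan_pair_iff_exists_lineMap_eq.2 ⟨(φ x - φ v) / (b - φ v), ?_⟩
  rw [centralProj, lineMap_lineMap_right, h1, lineMap_apply_one]

variable [LinearOrder 𝕜] [IsStrictOrderedRing 𝕜]

lemma centralProj_mem_segment (hv : φ v ≤ b) (hx : b ≤ φ x) :
    centralProj φ b v x ∈ [v -[𝕜] x] := by
  rw [segment_eq_image_lineMap]
  exact mem_image_of_mem _ ⟨div_nonneg (sub_nonneg.2 hv) (sub_nonneg.2 (hv.trans hx)),
    div_le_one_of_le₀ (sub_le_sub_right hx _) (sub_nonneg.2 (hv.trans hx))⟩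

lemma map_lt_of_map_centralProj_lt (g : E →ₗ[𝕜] 𝕜) (hv : φ v < b) (hx : φ v < φ x)
    (hg : g (centralProj φ b v x) < g v) : g x < g v := by
  have hpos : 0 < (b - φ v) / (φ x - φ v) := div_pos (sub_pos.2 hv) (sub_pos.2 hx)
  have hline : g (centralProj φ b v x) = lineMap (g v) (g x) ((b - φ v) / (φ x - φ v)) :=
    g.toAffineMap.apply_lineMap _ _ _
  rwa [hline, lineMap_lt_left_iff_lt hpos] at hg

lemma mem_line_or_map_lt_of_map_centralProj_lt {g : E →ₗ[𝕜] 𝕜} {q : E} (hv : φ v < b)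
    (hx : φ v < φ x) (hg : centralProj φ b v x ≠ q → g (centralProj φ b v x) < g v) :
    x ∈ line[𝕜, v, q] ∨ g x < g v := by
  rcases eq_or_ne (centralProj φ b v x) q with rfl | hne
  · exact Or.inl (mem_line_centralProj hv.ne hx.ne)
  · exact Or.inr (map_lt_of_map_centralProj_lt g hv hx (hg hne))

-- On the open halfspace `{φ v < φ}` central projection is fractional linear with positive
-- denominator, so it takes convex combinations to convex combinations with rescaled weights.
lemma convex_setOf_centralProj_mem (φ : E →ₗ[𝕜] 𝕜) (b : 𝕜) (v : E) {D : Set E}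
    (hD : Convex 𝕜 D) : Convex 𝕜 {x | φ v < φ x ∧ centralProj φ b v x ∈ D} := by
  rintro x ⟨hx, hxD⟩ y ⟨hy, hyD⟩ α β hα hβ hαβ
  have hxy : φ v < φ (α • x + β • y) :=
    convex_halfSpace_gt φ.isLinear (φ v) hx hy hα hβ hαβ
  refine ⟨hxy, ?_⟩
  have hs : 0 < φ x - φ v := sub_pos.2 hx
  have ht : 0 < φ y - φ v := sub_pos.2 hy
  obtain rfl : β = 1 - α := eq_sub_of_add_eq' hαβ
  have hweights : φ (α • x + (1 - α) • y) - φ v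
      = α * (φ x - φ v) + (1 - α) * (φ y - φ v) := by
    simp only [map_add, map_smul, smul_eq_mul]
    ring
  have hc : 0 < α * (φ x - φ v) + (1 - α) * (φ y - φ v) := hweights ▸ sub_pos.2 hxy
  have hcomb : centralProj φ b v (α • x + (1 - α) • y)
      = (α * (φ x - φ v) / (α * (φ x - φ v) + (1 - α) * (φ y - φ v))) • centralProj φ b v x
        + ((1 - α) * (φ y - φ v) / (α * (φ x - φ v) + (1 - α) * (φ y - φ v))) •
          centralProj φ b v y := by
    rw [centralProj, hweights]
    simp only [centralProj, lineMap_apply_module']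
    match_scalars <;> field_simp
    ring
  rw [hcomb]
  exact hD hxD hyD (div_nonneg (mul_nonneg hα hs.le) hc.le)
    (div_nonneg (mul_nonneg hβ ht.le) hc.le) (by rw [← add_div, div_self hc.ne'])

theorem convexHull_insert_inter_hyperplane {T : Set E} (hv : φ v < b) (hT : ∀ x ∈ T, b < φ x) :
    convexHull 𝕜 (insert v T) ∩ {x | φ x = b} = convexHull 𝕜 (centralProj φ b v '' T) := by
  apply Subset.antisymm
  · rintro y ⟨hy, rfl⟩
    have hsub : convexHull 𝕜 T ⊆
        {x | φ v < φ x ∧ centralProj φ (φ y) v x ∈ convexHull 𝕜 (centralProj φ (φ y) v '' T)} :=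
      convexHull_min
        (fun x hx => ⟨hv.trans (hT x hx), subset_convexHull 𝕜 _ (mem_image_of_mem _ hx)⟩)
        (convex_setOf_centralProj_mem φ (φ y) v (convex_convexHull 𝕜 _))
    rcases T.eq_empty_or_nonempty with rfl | hne
    · rw [insert_empty_eq, convexHull_singleton, mem_singleton_iff] at hy
      exact absurd (hy ▸ hv) (lt_irrefl _)
    rw [convexHull_insert hne, mem_convexJoin] at hy
    obtain ⟨_, rfl, z, hz, hyz⟩ := hy
    obtain ⟨hvz, hproj⟩ := hsub hz
    rw [segment_eq_image_lineMap] at hyz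
    obtain ⟨t, -, rfl⟩ := hyz
    rwa [centralProj_lineMap hvz.ne] at hproj
  · refine convexHull_min (subset_inter ?_ ?_)
      ((convex_convexHull 𝕜 _).inter (convex_hyperplane φ.isLinear b))
    · rintro _ ⟨x, hx, rfl⟩
      exact segment_subset_convexHull (mem_insert v T) (mem_insert_of_mem v hx)
        (centralProj_mem_segment hv.le (hT x hx).le)
    · exact image_centralProj_subset_hyperplane fun x hx => (hv.trans (hT x hx)).ne

theorem ncard_extremePoints_convexHull_insert_inter_hyperplane_le {T : Set E} (hfin : T.Finite)
    (hv : φ v < b) (hT : ∀ x ∈ T, b < φ x) :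
    ((convexHull 𝕜 (insert v T) ∩ {x | φ x = b}).extremePoints 𝕜).ncard ≤ T.ncard := by
  rw [convexHull_insert_inter_hyperplane hv hT]
  exact (ncard_le_ncard extremePoints_convexHull_subset (hfin.image _)).trans (ncard_image_le hfin)

end CentralProjection

section Faces

variable {𝕜 E : Type*} [Field 𝕜] [LinearOrder 𝕜] [IsStrictOrderedRing 𝕜] [AddCommGroup E]
  [Module 𝕜 E] {S : Set E} {v : E} {m : 𝕜}

lemma isExtreme_halfSpace_hyperplane (l : E →ₗ[𝕜] 𝕜) (m : 𝕜) :
    IsExtreme 𝕜 {x | l x ≤ m} {x | l x = m} := by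
  refine ⟨fun x hx => le_of_eq hx, ?_⟩
  rintro x hx y hy _ hm ⟨α, β, hα, hβ, hαβ, rfl⟩
  have hsum : α * l x + β * l y = α * m + β * m := by
    rw [← add_mul, hαβ, one_mul, ← show l (α • x + β • y) = m from hm, map_add, map_smul, map_smul,
      smul_eq_mul, smul_eq_mul]
  exact mul_left_cancel₀ hα.ne' ((add_eq_add_iff_eq_and_eq (mul_le_mul_of_nonneg_left hx hα.le)
    (mul_le_mul_of_nonneg_left hy hβ.le)).1 hsum).1

lemma convexHull_inter_hyperplane_of_forall_le {l : E →ₗ[𝕜] 𝕜} (h : ∀ x ∈ S, l x ≤ m) :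
    convexHull 𝕜 S ∩ {x | l x = m} = convexHull 𝕜 (S ∩ {x | l x = m}) := by
  refine Subset.antisymm ?_ (subset_inter (convexHull_mono inter_subset_left)
    (convexHull_min inter_subset_right (convex_hyperplane l.isLinear m)))
  have hconv : Convex 𝕜 {x | l x ≤ m ∧ (l x = m → x ∈ convexHull 𝕜 (S ∩ {x | l x = m}))} := by
    refine convex_iff_forall_pos.2 fun x ⟨hx, hxm⟩ y ⟨hy, hym⟩ α β hα hβ hαβ =>
      ⟨convex_halfSpace_le l.isLinear m hx hy hα.le hβ.le hαβ, fun hm => ?_⟩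
    have hseg : α • x + β • y ∈ openSegment 𝕜 x y := ⟨α, β, hα, hβ, hαβ, rfl⟩
    have hlx : l x = m := (isExtreme_halfSpace_hyperplane l m).left_mem_of_mem_openSegment
      hx hy hm hseg
    have hly : l y = m := (isExtreme_halfSpace_hyperplane l m).right_mem_of_mem_openSegment
      hx hy hm hseg
    exact convex_convexHull 𝕜 _ (hxm hlx) (hym hly) hα.le hβ.le hαβ
  have hsub : S ⊆ {x | l x ≤ m ∧ (l x = m → x ∈ convexHull 𝕜 (S ∩ {x | l x = m}))} :=
    fun x hx => ⟨h x hx, fun hxm => subset_convexHull 𝕜 _ ⟨hx, hxm⟩⟩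
  exact fun x hx => (convexHull_min hsub hconv hx.1).2 hx.2

lemma mem_extremePoints_convexHull_of_forall_lt {l : E →ₗ[𝕜] 𝕜} (hv : v ∈ S)
    (h : ∀ x ∈ S, x ≠ v → l x < l v) : v ∈ (convexHull 𝕜 S).extremePoints 𝕜 := by
  have hle : ∀ x ∈ S, l x ≤ l v := fun x hx =>
    (eq_or_ne x v).elim (fun hxv => hxv ▸ le_rfl) fun hxv => (h x hx hxv).le
  have hface : S ∩ {x | l x = l v} = {v} :=
    Subset.antisymm (fun x ⟨hx, hxv⟩ => by_contra fun hne => (h x hx hne).ne hxv)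
      (singleton_subset_iff.2 ⟨hv, rfl⟩)
  have hvertex : convexHull 𝕜 S ∩ {x | l x = l v} = {v} := by
    rw [convexHull_inter_hyperplane_of_forall_le hle, hface, convexHull_singleton]
  have hhull : ∀ x ∈ convexHull 𝕜 S, l x ≤ l v :=
    convexHull_min hle (convex_halfSpace_le l.isLinear (l v))
  exact mem_extremePoints_iff_left.2 ⟨subset_convexHull 𝕜 S hv, fun x hx y hy hxy =>
    hvertex.subset ⟨hx, (isExtreme_halfSpace_hyperplane l (l v)).left_mem_of_mem_openSegment
      (hhull x hx) (hhull y hy) rfl hxy⟩⟩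

variable [TopologicalSpace 𝕜] [TopologicalSpace E]

lemma isExposed_convexHull_inter_hyperplane {l : StrongDual 𝕜 E} (h : ∀ x ∈ S, l x ≤ m) :
    IsExposed 𝕜 (convexHull 𝕜 S) (convexHull 𝕜 S ∩ {x | l x = m}) := by
  have hle : ∀ x ∈ convexHull 𝕜 S, l x ≤ m :=
    convexHull_min h (convex_halfSpace_le l.toLinearMap.isLinear m)
  rintro ⟨z, hz, rfl⟩
  refine ⟨l, ext fun x => and_congr_right fun hx => ?_⟩
  exact ⟨fun hxz y hy => (hle y hy).trans_eq hxz.symm, fun hmax => (hle x hx).antisymm (hmax z hz)⟩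

end Faces

section LocallyConvex

variable {V : Type*} [AddCommGroup V] [Module ℝ V] [TopologicalSpace V] [IsTopologicalAddGroup V]
  [ContinuousSMul ℝ V] [LocallyConvexSpace ℝ V] [T2Space V]

lemma exists_forall_lt_of_mem_extremePoints_convexHull {P : Set V} (hP : P.Finite) {q : V}
    (hq : q ∈ (convexHull ℝ P).extremePoints ℝ) :
    ∃ f : StrongDual ℝ V, ∀ p ∈ P, p ≠ q → f p < f q := by
  have hnot : q ∉ convexHull ℝ (P \ {q}) := fun h =>
    ((convex_convexHull ℝ P).mem_extremePoints_iff_mem_sdiff_convexHull_sdiff.1 hq).2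
      (convexHull_mono (sdiff_subset_sdiff_left (subset_convexHull ℝ P)) h)
  obtain ⟨f, u, hf, hu⟩ := geometric_hahn_banach_closed_point (convex_convexHull ℝ (P \ {q}))
    ((hP.subset sdiff_subset).isClosed_convexHull ℝ) hnot
  exact ⟨f, fun p hp hpq => (hf p (subset_convexHull ℝ _ ⟨hp, hpq⟩)).trans hu⟩

lemma exists_map_eq_and_forall_lt {P : Set V} (hP : P.Finite) {φ : StrongDual ℝ V} {b : ℝ}
    {v q : V} (hv : φ v ≠ b) (hPb : P ⊆ {x | φ x = b})
    (hq : q ∈ (convexHull ℝ P).extremePoints ℝ) :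
    ∃ g : StrongDual ℝ V, g q = g v ∧ ∀ p ∈ P, p ≠ q → g p < g v := by
  obtain ⟨f, hf⟩ := exists_forall_lt_of_mem_extremePoints_convexHull hP hq
  have hqb : φ q = b := hPb (extremePoints_convexHull_subset hq)
  let c : ℝ := (f v - f q) / (b - φ v)
  have hgq : (f + c • φ) q = (f + c • φ) v := by
    have : b - φ v ≠ 0 := sub_ne_zero.2 hv.symm
    simp only [c, add_apply, smul_apply, smul_eq_mul, hqb]
    field_simp
    ring
  refine ⟨f + c • φ, hgq, fun p hp hpq => hgq ▸ ?_⟩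
  have hpb : φ p = b := hPb hp
  simpa only [add_apply, smul_apply, hpb, hqb, add_lt_add_iff_right] using hf p hp hpq

lemma exists_isExposed_subset_line {T : Set V} (hfin : T.Finite) {φ : StrongDual ℝ V} {b : ℝ}
    {v q : V} (hv : φ v < b) (hT : ∀ x ∈ T, b < φ x)
    (hq : q ∈ (convexHull ℝ (insert v T) ∩ {x | φ x = b}).extremePoints ℝ) :
    ∃ e : Set V, IsExposed ℝ (convexHull ℝ (insert v T)) e ∧ v ∈ e ∧ q ∈ e ∧
      e ⊆ line[ℝ, v, q] := by
  have hT' : ∀ x ∈ T, φ v < φ x := fun x hx => hv.trans (hT x hx)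
  have hqC : q ∈ convexHull ℝ (insert v T) := hq.1.1
  replace hq : q ∈ (convexHull ℝ (centralProj φ.toLinearMap b v '' T)).extremePoints ℝ := by
    rw [← convexHull_insert_inter_hyperplane hv hT]
    exact hq
  obtain ⟨g, hgq, hg⟩ := exists_map_eq_and_forall_lt (hfin.image _) hv.ne
    (image_centralProj_subset_hyperplane fun x hx => (hT' x hx).ne) hq
  have hmax : ∀ x ∈ insert v T, x ∈ line[ℝ, v, q] ∨ g x < g v := by
    rintro x (rfl | hx)
    · exact Or.inl (left_mem_affineSpan_pair ℝ x q)
    · exact mem_line_or_map_lt_of_map_centralProj_lt (g := g.toLinearMap) hv (hT' x hx)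
        (hg _ (mem_image_of_mem _ hx))
  have hline : ∀ x ∈ line[ℝ, v, q], g x = g v := by
    intro x hx
    obtain ⟨t, rfl⟩ := mem_affineSpan_pair_iff_exists_lineMap_eq.1 hx
    simp [lineMap_apply_module', hgq]
  have hle : ∀ x ∈ insert v T, g x ≤ g v := fun x hx =>
    (hmax x hx).elim (fun h => (hline x h).le) le_of_lt
  refine ⟨_, isExposed_convexHull_inter_hyperplane hle,
    ⟨subset_convexHull ℝ _ (mem_insert v T), rfl⟩, ⟨hqC, hgq⟩, ?_⟩
  calc convexHull ℝ (insert v T) ∩ {x | g x = g v}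
      = convexHull ℝ (insert v T ∩ {x | g x = g v}) :=
        convexHull_inter_hyperplane_of_forall_le (l := g.toLinearMap) hle
    _ ⊆ line[ℝ, v, q] :=
        convexHull_min (fun x ⟨hx, hgx⟩ => (hmax x hx).resolve_right hgx.not_lt)
          (AffineSubspace.convex _)

theorem stmt17_general {S : Set V} (hS : S.Finite) (φ : StrongDual ℝ V) {b : ℝ} {v : V}
    (hv : v ∈ S) (hvside : φ v < b) (hother : ∀ x ∈ S, x ≠ v → b < φ x) :
    (∀ q ∈ (convexHull ℝ S ∩ {x | φ x = b}).extremePoints ℝ,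
      ∃ e : Set V, IsExposed ℝ (convexHull ℝ S) e ∧ finrank ℝ (vectorSpan ℝ e) = 1 ∧
        v ∈ e.extremePoints ℝ ∧ q ∈ e ∧ e ∩ {x | φ x = b} = {q}) ∧
    ((convexHull ℝ S ∩ {x | φ x = b}).extremePoints ℝ).ncard ≤ S.ncard - 1 := by
  have hvext : v ∈ (convexHull ℝ S).extremePoints ℝ :=
    mem_extremePoints_convexHull_of_forall_lt (l := -φ.toLinearMap) hv fun x hx hxv =>
      neg_lt_neg (hvside.trans (hother x hx hxv))
  obtain ⟨T, hvT, rfl⟩ : ∃ T, v ∉ T ∧ insert v T = S :=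
    ⟨S \ {v}, notMem_sdiff_of_mem (mem_singleton v), insert_sdiff_self_of_mem hv⟩
  have hfin : T.Finite := hS.subset (subset_insert v T)
  have hT : ∀ x ∈ T, b < φ x := fun x hx =>
    hother x (mem_insert_of_mem v hx) (ne_of_mem_of_not_mem hx hvT)
  refine ⟨fun q hq => ?_, ?_⟩
  · obtain ⟨e, hexp, hve, hqe, hline⟩ := exists_isExposed_subset_line hfin hvside hT hq
    obtain rfl : φ q = b := hq.1.2
    have hcross : e ∩ {x | φ x = φ q} = {q} :=
      ((inter_subset_inter_left _ hline).trans_eq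
        (line_inter_hyperplane (φ := φ.toLinearMap) hvside.ne)).antisymm
        (singleton_subset_iff.2 ⟨hqe, rfl⟩)
    exact ⟨e, hexp,
      finrank_vectorSpan_eq_one_of_subset_line (ne_of_apply_ne φ hvside.ne) hve hqe hline,
      inter_extremePoints_subset_extremePoints_of_subset hexp.subset ⟨hve, hvext⟩, hqe, hcross⟩
  · rw [ncard_insert_of_notMem hvT hfin, Nat.add_sub_cancel]
    exact ncard_extremePoints_convexHull_insert_inter_hyperplane_le (φ := φ.toLinearMap) hfin
      hvside hT

end LocallyConvex

theorem stmt17 (d : ℕ)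
    (S : Set (EuclideanSpace ℝ (Fin d))) (hS : S.Finite)
    (w : EuclideanSpace ℝ (Fin d)) (b : ℝ) (hw : w ≠ 0)
    (v : EuclideanSpace ℝ (Fin d)) (hv : v ∈ S)
    (hvside : ⟪v, w⟫ < b)
    (hother : ∀ x ∈ S, x ≠ v → b < ⟪x, w⟫) :
    (∀ q ∈ (convexHull ℝ S ∩ {x | ⟪x, w⟫ = b}).extremePoints ℝ,
      ∃ e : Set (EuclideanSpace ℝ (Fin d)),
        IsExposed ℝ (convexHull ℝ S) e ∧ adim e = 1 ∧
        v ∈ e.extremePoints ℝ ∧ q ∈ e ∧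
        e ∩ {x | ⟪x, w⟫ = b} = {q}) ∧
    ((convexHull ℝ S ∩ {x | ⟪x, w⟫ = b}).extremePoints ℝ).ncard ≤ S.ncard - 1 := by
  simp only [real_inner_comm w] at hvside hother ⊢
  exact stmt17_general hS (innerSL ℝ w) hv hvside hother
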